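/- Fix d ≥ 1 and x_1,…,x_{d−1} ∈ K, and for each n ≥ 0 define the polynomial q_n(y) := det_{0≤i,j≤n−1}( L( x^{i+j} · (x − y) · ∏_{ℓ=1}^{d−1}(x − x_ℓ) ) ), where each matrix entry is a degree-1 polynomial in y obtained by applying L coefficient-wise. Then for all 0 ≤ s ≤ n−1 one has L( x^s · q_n(x) · ∏_{ℓ=1}^{d−1}(x − x_ℓ) ) = 0; that is, the polynomials q_n are orthogonal to 1, x, …, x^{n−1} with respect to the linear functional p(x) ↦ L( p(x) · ∏_{ℓ=1}^{d−1}(x − x_ℓ) ). -/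

import Mathlib

open Polynomial Matrix

/-
Let `f : A → R` be linear, with the case `A = R[X]`, `a = X`, `b i = X ^ i * w` in mind. Border the
moment matrix `(f (b i * a ^ j))`, with `n` rows and `n + 1` columns, by the row `(a ^ j)`.
Subtracting `a` times each column from the next one turns the determinant of the bordered matrix
into `det (f (b i * a ^ (j + 1)) - a * f (b i * a ^ j))`. Since only the bordering row has entries
outside `R`, multiplying by `b s` and applying `f` acts on that row alone and replaces it by
`(f (b s * a ^ j))`, which is already a row of the moment matrix.
-/

section BorderedMatrix

variable {R A : Type*} [CommRing R] [CommRing A] {n : ℕ}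

/-- The matrix `B` bordered by `v`, which becomes row `0`; for `m = n + 1` the result is square
and its determinant is linear in `v`. -/
def consRow {α : Type*} {m : ℕ} (v : Fin m → α) (B : Matrix (Fin n) (Fin m) α) :
    Matrix (Fin (n + 1)) (Fin m) α :=
  of (vecCons v (of.symm B))

@[simp]
theorem consRow_zero {α : Type*} {m : ℕ} (v : Fin m → α) (B : Matrix (Fin n) (Fin m) α)
    (j : Fin m) : consRow v B 0 j = v j :=
  rfl

@[simp]
theorem consRow_succ {α : Type*} {m : ℕ} (v : Fin m → α) (B : Matrix (Fin n) (Fin m) α)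
    (i : Fin n) (j : Fin m) : consRow v B i.succ j = B i j :=
  rfl

theorem det_consRow (v : Fin (n + 1) → A) (B : Matrix (Fin n) (Fin (n + 1)) A) :
    (consRow v B).det =
      ∑ j : Fin (n + 1), (-1) ^ (j : ℕ) * v j * (B.submatrix id j.succAbove).det :=
  det_succ_row_zero _

theorem det_consRow_pow (a : A) (B : Matrix (Fin n) (Fin (n + 1)) A) :
    (consRow (fun j => a ^ (j : ℕ)) B).det =
      det (of fun i j : Fin n => B i j.succ - a * B i j.castSucc) := by
  let reduced : Matrix (Fin (n + 1)) (Fin (n + 1)) A :=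
    consRow (Pi.single 0 1) (of fun i => vecCons (B i 0) fun j => B i j.succ - a * B i j.castSucc)
  calc
    _ = reduced.det := by
      refine det_eq_of_forall_col_eq_smul_add_pred (fun _ => a) (fun i => ?_) (fun i j => ?_)
      · cases i using Fin.cases <;> simp [reduced]
      · cases i using Fin.cases <;> simp [reduced, pow_succ']
    _ = _ := by
      rw [det_consRow, Fin.sum_univ_succ]
      simp [submatrix]

theorem map_det_consRow [Algebra R A] (f : A →ₗ[R] R) (v : Fin (n + 1) → A)
    (B : Matrix (Fin n) (Fin (n + 1)) R) :
    f (consRow v (B.map (algebraMap R A))).det = (consRow (f ∘ v) B).det := by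
  rw [det_consRow, det_consRow, map_sum]
  refine Finset.sum_congr rfl fun j _ => ?_
  have minor_eq : ((B.map (algebraMap R A)).submatrix id j.succAbove).det =
      algebraMap R A (B.submatrix id j.succAbove).det := by
    rw [RingHom.map_det, RingHom.mapMatrix_apply, submatrix_map]
  have term_eq_smul (c : R) :
      (-1) ^ (j : ℕ) * v j * algebraMap R A c = ((-1) ^ (j : ℕ) * c) • v j := by
    simp only [Algebra.smul_def, map_mul, map_pow, map_neg, map_one]
    ring
  rw [minor_eq, term_eq_smul, map_smul, smul_eq_mul, Function.comp_apply, mul_right_comm]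

theorem map_mul_det_moments_eq_zero [Algebra R A] (f : A →ₗ[R] R) (a : A) (b : Fin n → A)
    (s : Fin n) :
    f (b s * det (of fun i j : Fin n => algebraMap R A (f (b i * a ^ ((j : ℕ) + 1))) -
      a * algebraMap R A (f (b i * a ^ (j : ℕ))))) = 0 := by
  let moments : Matrix (Fin n) (Fin (n + 1)) R := of fun i j => f (b i * a ^ (j : ℕ))
  calc
    _ = (f ∘ₗ LinearMap.mulLeft R (b s))
          (consRow (fun j => a ^ (j : ℕ)) (moments.map (algebraMap R A))).det := by
      rw [det_consRow_pow]
      rfl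
    _ = (consRow (moments s) moments).det := map_det_consRow _ _ _
    _ = 0 := det_zero_of_row_eq (Fin.succ_ne_zero s).symm rfl

end BorderedMatrix

theorem stmt7_general {R : Type*} [CommRing R] (L : R[X] →ₗ[R] R) (w : R[X]) (n : ℕ) :
    ∀ s < n, L (X ^ s * det (of fun i j : Fin n =>
      C (L (X ^ ((i : ℕ) + (j : ℕ)) * X * w)) -
        C (L (X ^ ((i : ℕ) + (j : ℕ)) * w)) * X) * w) = 0 := by
  intro s hs
  have weighted := map_mul_det_moments_eq_zero L X (fun i : Fin n => X ^ (i : ℕ) * w) ⟨s, hs⟩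
  have moment_eq (i j : ℕ) : (X ^ i * w * X ^ j : R[X]) = X ^ (i + j) * w := by ring
  rw [mul_right_comm]
  simpa only [moment_eq, ← pow_succ, add_assoc, algebraMap_eq, X_mul_C] using weighted

theorem stmt7 {K : Type*} [Field K] [CharZero K]
    (L : Polynomial K →ₗ[K] K) (p : ℕ → Polynomial K)
    (hmonic : ∀ k, (p k).Monic) (hdeg : ∀ k, (p k).natDegree = k)
    (ω : ℕ → K) (hω : ∀ k, ω k ≠ 0)
    (horth : ∀ m k, L (p m * p k) = if m = k then ω k else 0)
    (μ : ℕ → K) (hμ : ∀ k, μ k = L (X ^ k))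
    (d : ℕ) (hd : 1 ≤ d) (x : Fin (d - 1) → K) (n : ℕ)
    (q : Polynomial K)
    -- q is the n×n determinant whose (i,j)-entry is the degree-1 polynomial (in the
    -- variable `X` of `q`) obtained by applying L coefficient-wise to
    -- x^(i+j) · (x − y) · ∏ (x − x_ℓ), i.e. C (L (x^(i+j+1)·∏)) − C (L (x^(i+j)·∏)) · X
    (hq : q = Matrix.det (Matrix.of fun i j : Fin n =>
        C (L (X ^ ((i : ℕ) + (j : ℕ)) * X * ∏ ℓ, (X - C (x ℓ)))) -
          C (L (X ^ ((i : ℕ) + (j : ℕ)) * ∏ ℓ, (X - C (x ℓ)))) * X)) :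
    ∀ s < n, L (X ^ s * q * ∏ ℓ, (X - C (x ℓ))) = 0 :=
  hq ▸ stmt7_general L _ n
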